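/- Let (G, G⁺, Δ) be a Garside structure and x ∈ G. Let y ∈ R(x), and let α, β ∈ G be such that α⁻¹yα ∈ R(x) and β⁻¹yβ ∈ R(x). Then (α ∧ β)⁻¹ y (α ∧ β) ∈ R(x). -/

import Mathlib

open scoped Pointwise Classical

/-- A Garside structure on a group `G`: a submonoid `pos` of positive elements with
trivial units, prefix and suffix lattice operations, and a Garside element `delta`. -/
structure GarsideStructure (G : Type*) [Group G] where
  /-- the submonoid of positive elements -/
  pos : Submonoid G
  /-- the Garside element Δ -/
  delta : G
  /-- meet for the prefix order -/
  meet : G → G → G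
  /-- join for the prefix order -/
  join : G → G → G
  /-- meet for the suffix order -/
  rmeet : G → G → G
  /-- join for the suffix order -/
  rjoin : G → G → G
  units_triv : ∀ a : G, a ∈ pos → a⁻¹ ∈ pos → a = 1
  meet_le_left : ∀ a b : G, (meet a b)⁻¹ * a ∈ pos
  meet_le_right : ∀ a b : G, (meet a b)⁻¹ * b ∈ pos
  le_meet : ∀ a b c : G, c⁻¹ * a ∈ pos → c⁻¹ * b ∈ pos → c⁻¹ * meet a b ∈ pos
  le_join_left : ∀ a b : G, a⁻¹ * join a b ∈ pos
  le_join_right : ∀ a b : G, b⁻¹ * join a b ∈ pos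
  join_le : ∀ a b c : G, a⁻¹ * c ∈ pos → b⁻¹ * c ∈ pos → (join a b)⁻¹ * c ∈ pos
  rmeet_le_left : ∀ a b : G, a * (rmeet a b)⁻¹ ∈ pos
  rmeet_le_right : ∀ a b : G, b * (rmeet a b)⁻¹ ∈ pos
  le_rmeet : ∀ a b c : G, a * c⁻¹ ∈ pos → b * c⁻¹ ∈ pos → rmeet a b * c⁻¹ ∈ pos
  rjoin_le_left : ∀ a b : G, rjoin a b * a⁻¹ ∈ pos
  rjoin_le_right : ∀ a b : G, rjoin a b * b⁻¹ ∈ pos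
  rjoin_le : ∀ a b c : G, c * a⁻¹ ∈ pos → c * b⁻¹ ∈ pos → c * (rjoin a b)⁻¹ ∈ pos
  delta_pos : delta ∈ pos
  /-- Δ is balanced: its positive prefixes coincide with its positive suffixes -/
  delta_balanced : ∀ s : G, s ∈ pos → (s⁻¹ * delta ∈ pos ↔ delta * s⁻¹ ∈ pos)
  /-- the set of simple elements (divisors of Δ) is finite -/
  divDelta_finite : {s : G | s ∈ pos ∧ s⁻¹ * delta ∈ pos}.Finite
  /-- the simple elements generate `G` -/
  divDelta_generates : Subgroup.closure {s : G | s ∈ pos ∧ s⁻¹ * delta ∈ pos} = ⊤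
  /-- the atoms generate the positive monoid -/
  atoms_generate :
    Submonoid.closure {a : G | a ∈ pos ∧ a ≠ 1 ∧
      ∀ b ∈ pos, b⁻¹ * a ∈ pos → b = 1 ∨ b = a} = pos
  /-- every atom divides Δ -/
  atoms_divide_delta : ∀ a : G, a ∈ pos → a ≠ 1 →
    (∀ b ∈ pos, b⁻¹ * a ∈ pos → b = 1 ∨ b = a) → a⁻¹ * delta ∈ pos
  /-- every element is bounded below and above by powers of Δ -/
  delta_bounds : ∀ x : G, ∃ p q : ℤ, p ≤ q ∧ (delta ^ p)⁻¹ * x ∈ pos ∧ x⁻¹ * delta ^ q ∈ pos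
  /-- conjugation by Δ maps the positive monoid bijectively onto itself -/
  conj_delta : ∀ a : G, a ∈ pos ↔ delta * a * delta⁻¹ ∈ pos
  /-- some positive power of Δ is central -/
  central_power : ∃ n : ℕ, 0 < n ∧ delta ^ n ∈ Subgroup.center G
  /-- no infinite strictly decreasing (for the prefix order) sequence of positive elements -/
  no_infinite_descent : ¬ ∃ f : ℕ → G, (∀ n, f n ∈ pos) ∧
    ∀ n, (f (n + 1))⁻¹ * f n ∈ pos ∧ f (n + 1) ≠ f n

namespace GarsideStructure

variable {G : Type*} [Group G] (S : GarsideStructure G)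

/-- the prefix order: `a ≼ b` iff `a⁻¹ * b` is positive -/
def le (a b : G) : Prop := a⁻¹ * b ∈ S.pos

/-- the set of positive prefixes of an element -/
def Div (d : G) : Set G := {s : G | s ∈ S.pos ∧ S.le s d}

/-- atoms: nontrivial positive elements with no nontrivial proper positive prefix -/
def IsAtomic (a : G) : Prop :=
  a ∈ S.pos ∧ a ≠ 1 ∧ ∀ b ∈ S.pos, S.le b a → b = 1 ∨ b = a

/-- the set of atoms -/
def atoms : Set G := {a : G | S.IsAtomic a}

/-- the left denominator of `x`: `D_L x = (1 ∧ x)⁻¹` -/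
def DL (x : G) : G := (S.meet 1 x)⁻¹

/-- the left numerator of `x`: `N_L x = D_L x * x` -/
def NL (x : G) : G := S.DL x * x

/-- the (left) swap `φ(x) = N_L x * (D_L x)⁻¹ = D_L x * x * (D_L x)⁻¹` -/
def swap (x : G) : G := S.DL x * x * (S.DL x)⁻¹

/-- an element is recurrent if it is fixed by some positive iterate of the swap map -/
def Recurrent (x : G) : Prop := ∃ m : ℕ, 0 < m ∧ S.swap^[m] x = x

/-- the set `R(x)` of recurrent conjugates of `x` -/
def Rset (x : G) : Set G := {y : G | IsConj x y ∧ S.Recurrent y}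

/-- the set `C⁺(x)` of positive conjugates of `x` -/
def Cpos (x : G) : Set G := {y : G | IsConj x y ∧ y ∈ S.pos}

/-- the set `C⁻(x)` of negative conjugates of `x` -/
def Cneg (x : G) : Set G := {y : G | IsConj x y ∧ y⁻¹ ∈ S.pos}

/-- the transport of `u` at `y`: with `y = a⁻¹ b` reduced, `u^{(1)} = (a u) ∧ (b u)` -/
def transport (y u : G) : G := S.meet (S.DL y * u) (S.NL y * u)

/-- `Δ_X`: the least upper bound for the prefix order of a set `X` (`1` if there is none) -/
noncomputable def deltaOf (X : Set G) : G :=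
  if h : ∃ d : G, (∀ x ∈ X, S.le x d) ∧ ∀ c : G, (∀ x ∈ X, S.le x c) → S.le d c
  then h.choose else 1

/-- the closure `X̄ = Div(Δ_X) ∩ 𝒜` of a set of atoms -/
noncomputable def closureOf (X : Set G) : Set G := S.Div (S.deltaOf X) ∩ S.atoms

/-- the subgroup `G_X` generated by the closure of `X` -/
noncomputable def GX (X : Set G) : Subgroup G := Subgroup.closure (S.closureOf X)

/-- the support of an element: the closure of the set of atoms appearing in atom
factorizations of its left denominator and left numerator -/
noncomputable def supp (x : G) : Set G :=
  if h : ∃ p : List G × List G,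
      (∀ a ∈ p.1, a ∈ S.atoms) ∧ (∀ a ∈ p.2, a ∈ S.atoms) ∧
      p.1.prod = S.DL x ∧ p.2.prod = S.NL x
  then S.closureOf ({a : G | a ∈ h.choose.1} ∪ {a : G | a ∈ h.choose.2})
  else ∅

/-- an LCM-Garside structure -/
structure IsLCM : Prop where
  delta_eq : S.delta = S.deltaOf S.atoms
  balanced : ∀ X ⊆ S.atoms, ∀ s ∈ S.pos,
    (S.le s (S.deltaOf X) ↔ S.deltaOf X * s⁻¹ ∈ S.pos)
  div_eq : ∀ X ⊆ S.atoms,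
    S.Div (S.deltaOf X) = S.Div S.delta ∩ {g : G | g ∈ S.GX X ∧ g ∈ S.pos}
  factor_closed : ∀ X ⊆ S.atoms, ∀ g : G, g ∈ S.GX X → g ∈ S.pos →
    ∀ a b : G, a ∈ S.pos → b ∈ S.pos → g = a * b → a ∈ S.GX X ∧ b ∈ S.GX X
  lattice_closed : ∀ X ⊆ S.atoms, ∀ a b : G, a ∈ S.GX X → b ∈ S.GX X →
    S.meet a b ∈ S.GX X ∧ S.join a b ∈ S.GX X
  fraction_closed : ∀ X ⊆ S.atoms, ∀ g : G, g ∈ S.GX X →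
    S.DL g ∈ S.GX X ∧ S.NL g ∈ S.GX X

/-- a standard parabolic subgroup: the subgroup generated by a saturated set of atoms -/
noncomputable def IsStandardParabolic (H : Subgroup G) : Prop :=
  ∃ X : Set G, X ⊆ S.atoms ∧ S.closureOf X = X ∧ H = S.GX X

/-- a parabolic subgroup: a conjugate of a standard parabolic subgroup -/
noncomputable def IsParabolic (H : Subgroup G) : Prop :=
  ∃ (P : Subgroup G) (c : G), S.IsStandardParabolic P ∧
    H = Subgroup.map (MulAut.conj c).toMonoidHom P

/-- the structure is support-preserving if conjugations between positive elements
conjugate the corresponding parabolic subgroups of the supports -/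
noncomputable def SupportPreserving : Prop :=
  ∀ y ∈ S.pos, ∀ z ∈ S.pos, ∀ α : G, α⁻¹ * y * α = z →
    Subgroup.map (MulAut.conj α⁻¹).toMonoidHom (S.GX (S.supp y)) = S.GX (S.supp z)

/-- `P` is the parabolic closure of `x` -/
noncomputable def IsParabolicClosure (x : G) (P : Subgroup G) : Prop :=
  S.IsParabolic P ∧ x ∈ P ∧ ∀ H : Subgroup G, S.IsParabolic H → x ∈ H → P ≤ H

end GarsideStructure

/-!
A pair `(y, u)` is read as an arrow `y ⟶ u⁻¹ * y * u` of the conjugacy groupoid. The swap acts on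
such arrows: `(y, u) ↦ (swap y, transport y u)` is compatible with the swap on sources and on
targets. Transport is monotone and fixes every power of `Δ`, so it preserves the finite intervals
`[Δ ^ p, Δ ^ q]`; and the swap of an arrow determines the arrow once its ends are recurrent. By
finiteness, an arrow is periodic exactly when both of its ends are recurrent. As transport commutes
with `∧`, the meet of two periodic arrows with the same source is periodic, and its target is
therefore recurrent.
-/

namespace GarsideStructure

open Function Set Subgroup

variable {G : Type*} [Group G] (S : GarsideStructure G)

section PrefixOrder

variable {S} {a b c d : G}

theorem le_refl (a : G) : S.le a a := by
  simp only [le, inv_mul_cancel, S.pos.one_mem]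

theorem le.trans (hab : S.le a b) (hbc : S.le b c) : S.le a c := by
  simpa only [le, mul_assoc, mul_inv_cancel_left] using S.pos.mul_mem hab hbc

theorem le.antisymm (hab : S.le a b) (hba : S.le b a) : a = b :=
  inv_mul_eq_one.1 (S.units_triv _ hab (by simpa [le] using hba))

variable (S) in
/-- The prefix order with its meet operation, packaged to give access to Mathlib's lattice lemmas.
It is not an instance, since it depends on the Garside structure. -/
abbrev prefixSemilattice : SemilatticeInf G where
  le := S.le
  le_refl := le_refl
  le_trans _ _ _ := le.trans
  le_antisymm _ _ := le.antisymm
  inf := S.meet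
  inf_le_left := S.meet_le_left
  inf_le_right := S.meet_le_right
  le_inf a b c := S.le_meet b c a

theorem le_meet_iff : S.le c (S.meet a b) ↔ S.le c a ∧ S.le c b :=
  @le_inf_iff G S.prefixSemilattice c a b

theorem meet_le_meet (hab : S.le a b) (hcd : S.le c d) : S.le (S.meet a c) (S.meet b d) :=
  @inf_le_inf G S.prefixSemilattice _ _ _ _ hab hcd

theorem one_le_iff_mem_pos : S.le 1 a ↔ a ∈ S.pos := by
  simp only [le, inv_one, one_mul]

theorem le_mul_right_iff_mem_pos : S.le a (a * b) ↔ b ∈ S.pos := by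
  simp only [le, inv_mul_cancel_left]

theorem mul_le_mul_left_iff (g : G) : S.le (g * a) (g * b) ↔ S.le a b := by
  simp only [le, mul_inv_rev, mul_assoc, inv_mul_cancel_left]

theorem inv_mul_le_iff_le_mul : S.le (a⁻¹ * b) c ↔ S.le b (a * c) := by
  rw [← mul_le_mul_left_iff a, mul_inv_cancel_left]

theorem mul_le_mul_right_iff_of_mem_normalizer {g : G} (hg : g ∈ normalizer (S.pos : Set G)) :
    S.le (a * g) (b * g) ↔ S.le a b := by
  simpa [le, mul_assoc] using (inv_mem hg (a⁻¹ * b)).symm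

variable (S)

theorem mul_meet (g a b : G) : g * S.meet a b = S.meet (g * a) (g * b) := by
  let := S.prefixSemilattice
  let e : G ≃o G := { Equiv.mulLeft g with map_rel_iff' := mul_le_mul_left_iff g }
  exact e.map_inf a b

theorem meet_mul_of_mem_normalizer {g : G} (hg : g ∈ normalizer (S.pos : Set G)) (a b : G) :
    S.meet a b * g = S.meet (a * g) (b * g) := by
  let := S.prefixSemilattice
  let e : G ≃o G :=
    { Equiv.mulRight g with map_rel_iff' := mul_le_mul_right_iff_of_mem_normalizer hg }
  exact e.map_inf a b

end PrefixOrder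

section Intervals

theorem Div_one : S.Div 1 = {1} := by
  refine Subset.antisymm (fun u ⟨hu, hu'⟩ ↦ ?_) ?_
  · exact le.antisymm hu' (one_le_iff_mem_pos.2 hu)
  · exact singleton_subset_iff.2 ⟨S.pos.one_mem, le_refl 1⟩

theorem Div_mul_subset {a g : G} (ha : a ∈ S.pos) (hg : g ∈ S.pos)
    (hgN : g ∈ normalizer (S.pos : Set G)) : S.Div (a * g) ⊆ S.Div a * S.Div g := by
  rintro u ⟨hu, hug⟩
  have hmeet : S.meet u a ∈ S.pos := one_le_iff_mem_pos.1
    (le_meet_iff.2 ⟨one_le_iff_mem_pos.2 hu, one_le_iff_mem_pos.2 ha⟩)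
  have hrest : S.le ((S.meet u a)⁻¹ * u) g := by
    rw [inv_mul_le_iff_le_mul, S.meet_mul_of_mem_normalizer hgN]
    exact le_meet_iff.2 ⟨le_mul_right_iff_mem_pos.2 hg, hug⟩
  exact mem_mul.2 ⟨S.meet u a, ⟨hmeet, S.meet_le_right u a⟩, (S.meet u a)⁻¹ * u,
    ⟨S.meet_le_left u a, hrest⟩, mul_inv_cancel_left _ _⟩

theorem delta_zpow_mem_normalizer (n : ℤ) : S.delta ^ n ∈ normalizer (S.pos : Set G) :=
  zpow_mem (show S.delta ∈ normalizer (S.pos : Set G) from S.conj_delta) n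

theorem finite_Div_delta_pow (n : ℕ) : (S.Div (S.delta ^ n)).Finite := by
  induction n with
  | zero => simp only [pow_zero, Div_one, finite_singleton]
  | succ n ih =>
    rw [pow_succ]
    exact (ih.mul S.divDelta_finite).subset (S.Div_mul_subset (S.pos.pow_mem S.delta_pos n)
      S.delta_pos S.conj_delta)

theorem finite_setOf_delta_zpow_le_le {p q : ℤ} (hpq : p ≤ q) :
    {u | S.le (S.delta ^ p) u ∧ S.le u (S.delta ^ q)}.Finite := by
  obtain ⟨n, rfl⟩ := Int.le.dest hpq
  refine ((S.finite_Div_delta_pow n).image (S.delta ^ p * ·)).subset ?_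
  rintro u ⟨hpu, huq⟩
  refine ⟨(S.delta ^ p)⁻¹ * u, ⟨hpu, ?_⟩, mul_inv_cancel_left _ _⟩
  rwa [inv_mul_le_iff_le_mul, ← zpow_natCast, ← zpow_add]

end Intervals

section Transport

theorem meet_DL_NL (y : G) : S.meet (S.DL y) (S.NL y) = 1 := by
  have h := S.mul_meet (S.DL y) 1 y
  rwa [mul_one, DL, inv_mul_cancel, eq_comm] at h

theorem transport_meet (y u v : G) :
    S.transport y (S.meet u v) = S.meet (S.transport y u) (S.transport y v) := by
  simp only [transport, mul_meet]
  exact @inf_inf_inf_comm G S.prefixSemilattice _ _ _ _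

theorem transport_mono (y : G) {u v : G} (huv : S.le u v) :
    S.le (S.transport y u) (S.transport y v) :=
  meet_le_meet ((mul_le_mul_left_iff _).2 huv) ((mul_le_mul_left_iff _).2 huv)

theorem transport_of_mem_normalizer (y : G) {g : G} (hg : g ∈ normalizer (S.pos : Set G)) :
    S.transport y g = g := by
  rw [transport, ← S.meet_mul_of_mem_normalizer hg, meet_DL_NL, one_mul]

theorem mapsTo_transport (y : G) {g h : G} (hg : g ∈ normalizer (S.pos : Set G))
    (hh : h ∈ normalizer (S.pos : Set G)) :
    MapsTo (S.transport y) {u | S.le g u ∧ S.le u h} {u | S.le g u ∧ S.le u h} := by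
  rintro u ⟨hgu, huh⟩
  constructor
  · simpa only [S.transport_of_mem_normalizer y hg] using S.transport_mono y hgu
  · simpa only [S.transport_of_mem_normalizer y hh] using S.transport_mono y huh

theorem transport_eq (y u : G) :
    S.transport y u = S.DL y * u * (S.DL (u⁻¹ * y * u))⁻¹ := by
  rw [DL.eq_1 S (u⁻¹ * y * u), inv_inv, mul_meet, transport, NL]
  congr 1 <;> group

end Transport

section Arrows

/-- The target `u⁻¹ * y * u` of the arrow `(y, u)` of the conjugacy groupoid of `G`, whose source
is `y`. -/
def arrowTarget (p : G × G) : G := p.2⁻¹ * p.1 * p.2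

/-- The action of the swap on the arrows of the conjugacy groupoid: `(y, u)` is sent to the
transport of `u` at `y`, as an arrow with source `swap y`. -/
def arrowSwap (p : G × G) : G × G := (S.swap p.1, S.transport p.1 p.2)

theorem semiconj_fst_arrowSwap : Semiconj Prod.fst S.arrowSwap S.swap := fun _ ↦ rfl

theorem semiconj_arrowTarget_arrowSwap : Semiconj arrowTarget S.arrowSwap S.swap := by
  rintro ⟨y, u⟩
  simp only [arrowTarget, arrowSwap, transport_eq, swap]
  group

theorem injOn_arrowSwap :
    InjOn S.arrowSwap {p | S.Recurrent p.1 ∧ S.Recurrent (arrowTarget p)} := by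
  rintro ⟨y, u⟩ ⟨hy, hyu⟩ ⟨z, v⟩ ⟨hz, hzv⟩ heq
  have swap_injOn : InjOn S.swap {z | S.Recurrent z} := (bijOn_periodicPts S.swap).injOn
  obtain rfl : y = z := swap_injOn hy hz (congrArg Prod.fst heq)
  have htarget : u⁻¹ * y * u = v⁻¹ * y * v := by
    refine swap_injOn hyu hzv ?_
    exact (S.semiconj_arrowTarget_arrowSwap (y, u)).symm.trans
      ((congrArg arrowTarget heq).trans (S.semiconj_arrowTarget_arrowSwap (y, v)))
  have htransport : S.transport y u = S.transport y v := congrArg Prod.snd heq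
  rw [transport_eq, transport_eq, htarget] at htransport
  rw [mul_left_cancel (mul_right_cancel htransport)]

theorem iterate_arrowSwap_meet (k : ℕ) (y u v : G) :
    S.arrowSwap^[k] (y, S.meet u v) =
      ((S.arrowSwap^[k] (y, u)).1,
        S.meet (S.arrowSwap^[k] (y, u)).2 (S.arrowSwap^[k] (y, v)).2) := by
  induction k generalizing y u v with
  | zero => rfl
  | succ k ih => simp only [iterate_succ_apply, arrowSwap, transport_meet, ih]

theorem meet_mem_periodicPts_arrowSwap {y u v : G} (hu : (y, u) ∈ periodicPts S.arrowSwap)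
    (hv : (y, v) ∈ periodicPts S.arrowSwap) : (y, S.meet u v) ∈ periodicPts S.arrowSwap := by
  obtain ⟨k, hk, hku⟩ := hu
  obtain ⟨l, hl, hlv⟩ := hv
  refine mk_mem_periodicPts (Nat.mul_pos hk hl) ?_
  rw [IsPeriodicPt, IsFixedPt, iterate_arrowSwap_meet, (hku.mul_const l).eq,
    (hlv.const_mul k).eq]

end Arrows

section Periodicity

variable {S} in
theorem Recurrent.swap {y : G} (hy : S.Recurrent y) : S.Recurrent (S.swap y) :=
  (bijOn_periodicPts S.swap).mapsTo hy

theorem mem_periodicPts_of_mapsTo_of_injOn {X : Type*} {f : X → X} {s : Set X} (hs : s.Finite)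
    (hmaps : MapsTo f s s) (hinj : InjOn f s) {x : X} (hx : x ∈ s) : x ∈ periodicPts f := by
  have : Finite s := hs
  have hperiodic := (hmaps.restrict_inj.2 hinj).mem_periodicPts ⟨x, hx⟩
  have hsemiconj : Semiconj Subtype.val (hmaps.restrict f s s) f := fun _ ↦ rfl
  exact hsemiconj.mapsTo_periodicPts hperiodic

theorem mem_periodicPts_arrowSwap_iff {y u : G} :
    (y, u) ∈ periodicPts S.arrowSwap ↔ S.Recurrent y ∧ S.Recurrent (u⁻¹ * y * u) := by
  refine ⟨fun h ↦ ⟨S.semiconj_fst_arrowSwap.mapsTo_periodicPts h,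
    S.semiconj_arrowTarget_arrowSwap.mapsTo_periodicPts h⟩, fun ⟨hy, hyu⟩ ↦ ?_⟩
  obtain ⟨p, q, hpq, hpu, huq⟩ := S.delta_bounds u
  let recurrentArrows : Set (G × G) := {a | S.Recurrent a.1 ∧ S.Recurrent (arrowTarget a)}
  let box : Set (G × G) := {z | z ∈ periodicOrbit S.swap y} ×ˢ
    {v | S.le (S.delta ^ p) v ∧ S.le v (S.delta ^ q)}
  have finite_box : box.Finite :=
    (List.finite_toSet _).prod (S.finite_setOf_delta_zpow_le_le hpq)
  have mapsTo_recurrentArrows : MapsTo S.arrowSwap recurrentArrows recurrentArrows := by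
    rintro a ⟨hsource, htarget⟩
    refine ⟨hsource.swap, ?_⟩
    rw [S.semiconj_arrowTarget_arrowSwap]
    exact htarget.swap
  have mapsTo_box : MapsTo S.arrowSwap box box := by
    rintro ⟨z, v⟩ ⟨hz, hv⟩
    obtain ⟨n, rfl⟩ := (mem_periodicOrbit_iff hy).1 hz
    exact ⟨(mem_periodicOrbit_iff hy).2 ⟨n + 1, iterate_succ_apply' _ _ _⟩,
      S.mapsTo_transport _ (S.delta_zpow_mem_normalizer p) (S.delta_zpow_mem_normalizer q) hv⟩
  exact mem_periodicPts_of_mapsTo_of_injOn (finite_box.inter_of_right recurrentArrows)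
    (mapsTo_recurrentArrows.inter_inter mapsTo_box) (S.injOn_arrowSwap.mono inter_subset_left)
    ⟨⟨hy, hyu⟩, self_mem_periodicOrbit hy, hpu, huq⟩

end Periodicity

variable {S} in
theorem Recurrent.conj_meet {y α β : G} (hy : S.Recurrent y) (hα : S.Recurrent (α⁻¹ * y * α))
    (hβ : S.Recurrent (β⁻¹ * y * β)) : S.Recurrent ((S.meet α β)⁻¹ * y * S.meet α β) :=
  (S.mem_periodicPts_arrowSwap_iff.1 <| S.meet_mem_periodicPts_arrowSwap
    (S.mem_periodicPts_arrowSwap_iff.2 ⟨hy, hα⟩) (S.mem_periodicPts_arrowSwap_iff.2 ⟨hy, hβ⟩)).2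

end GarsideStructure

/-- convexity. If `y ∈ R(x)` and the conjugates of `y` by `α` and `β`
lie in `R(x)`, then so does the conjugate of `y` by `α ∧ β`. -/
theorem garside_convexity {G : Type*} [Group G]
    (S : GarsideStructure G) (x y α β : G)
    (hy : y ∈ S.Rset x)
    (hα : α⁻¹ * y * α ∈ S.Rset x) (hβ : β⁻¹ * y * β ∈ S.Rset x) :
    (S.meet α β)⁻¹ * y * S.meet α β ∈ S.Rset x := by
  have hconj : IsConj y ((S.meet α β)⁻¹ * y * S.meet α β) :=
    isConj_iff.2 ⟨(S.meet α β)⁻¹, by rw [inv_inv]⟩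
  exact ⟨hy.1.trans hconj, hy.2.conj_meet hα.2 hβ.2⟩
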